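/- arXiv:1507.05214 — 2 statements merged into one kernel-verified Lean document; each statement's English description precedes it below -/
import Mathlib

section
/- The matrix P is primitive: there exists an integer k ≥ 1 such that every entry of P^k is strictly positive. -/
open Matrix

/-- The random-walk transition matrix `H` of a bipartite graph with parts `U`, `V`
and edge relation `E`: `H i j = 1 / dᵢ` if `j` is adjacent to `i`, and `0` otherwise. -/
noncomputable def Hmat {U V : Type*} [Fintype U] [Fintype V]
    (E : U → V → Prop) [∀ u v, Decidable (E u v)] :
    Matrix (U ⊕ V) (U ⊕ V) ℝ :=
  Matrix.of fun i j =>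
    match i, j with
    | Sum.inl u, Sum.inr v =>
        if E u v then 1 / ((Finset.univ.filter fun v' => E u v').card : ℝ) else 0
    | Sum.inr v, Sum.inl u =>
        if E u v then 1 / ((Finset.univ.filter fun u' => E u' v).card : ℝ) else 0
    | _, _ => 0

/-- The block-wise teleportation matrix `M`: `M i j = 1 / xᵢ` if `j` lies in the same
part as `i` (where `xᵢ` is the size of the part containing `i`), and `0` otherwise. -/
noncomputable def Mmat (U V : Type*) [Fintype U] [Fintype V] :
    Matrix (U ⊕ V) (U ⊕ V) ℝ :=
  Matrix.of fun i j =>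
    match i, j with
    | Sum.inl _, Sum.inl _ => 1 / (Fintype.card U : ℝ)
    | Sum.inr _, Sum.inr _ => 1 / (Fintype.card V : ℝ)
    | _, _ => 0

/-- The BipartiteRank transition matrix `P = ε H + (1 - ε) M`. -/
noncomputable def Pmat {U V : Type*} [Fintype U] [Fintype V]
    (E : U → V → Prop) [∀ u v, Decidable (E u v)] (ε : ℝ) :
    Matrix (U ⊕ V) (U ⊕ V) ℝ :=
  ε • Hmat E + (1 - ε) • Mmat U V

/-!
Two steps of the walk reach every vertex with positive probability. A target in the same part is
reached by teleporting twice inside that part. For a target `j` in the other part, pick a neighbour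
`l` of `j`: it lies in the starting part, so one can teleport to `l` and then walk along the edge
from `l` to `j`.
-/

theorem matrix_mul_apply_pos {l m n R : Type*} [Fintype m]
    [Semiring R] [PartialOrder R] [IsStrictOrderedRing R]
    {A : Matrix l m R} {B : Matrix m n R} {i : l} {j : n} {k : m}
    (hA : ∀ k, 0 ≤ A i k) (hB : ∀ k, 0 ≤ B k j) (hik : 0 < A i k) (hkj : 0 < B k j) :
    0 < (A * B) i j := by
  rw [Matrix.mul_apply]
  exact Finset.sum_pos' (fun k _ => mul_nonneg (hA k) (hB k))
    ⟨k, Finset.mem_univ k, mul_pos hik hkj⟩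

section BipartiteRank

variable {U V : Type*} [Fintype U] [Fintype V]

theorem Mmat_nonneg (i j : U ⊕ V) : 0 ≤ Mmat U V i j := by
  rcases i with u | v <;> rcases j with u' | v' <;> simp only [Mmat, Matrix.of_apply] <;>
    positivity

theorem Mmat_inl_inl_pos (u u' : U) : 0 < Mmat U V (Sum.inl u) (Sum.inl u') := by
  have : Nonempty U := ⟨u⟩
  exact one_div_pos.mpr (Nat.cast_pos.mpr Fintype.card_pos)

theorem Mmat_inr_inr_pos (v v' : V) : 0 < Mmat U V (Sum.inr v) (Sum.inr v') := by
  have : Nonempty V := ⟨v⟩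
  exact one_div_pos.mpr (Nat.cast_pos.mpr Fintype.card_pos)

variable {E : U → V → Prop} [∀ u v, Decidable (E u v)]

theorem Hmat_nonneg (i j : U ⊕ V) : 0 ≤ Hmat E i j := by
  rcases i with u | v <;> rcases j with u' | v' <;> simp only [Hmat, Matrix.of_apply] <;>
    positivity

theorem Hmat_inl_inr_pos {u : U} {v : V} (huv : E u v) :
    0 < Hmat E (Sum.inl u) (Sum.inr v) := by
  have degree_pos : 0 < (Finset.univ.filter fun v' => E u v').card :=
    Finset.card_pos.mpr ⟨v, Finset.mem_filter.mpr ⟨Finset.mem_univ v, huv⟩⟩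
  simpa only [Hmat, Matrix.of_apply, if_pos huv] using one_div_pos.mpr (Nat.cast_pos.mpr degree_pos)

theorem Hmat_inr_inl_pos {u : U} {v : V} (huv : E u v) :
    0 < Hmat E (Sum.inr v) (Sum.inl u) := by
  have degree_pos : 0 < (Finset.univ.filter fun u' => E u' v).card :=
    Finset.card_pos.mpr ⟨u, Finset.mem_filter.mpr ⟨Finset.mem_univ u, huv⟩⟩
  simpa only [Hmat, Matrix.of_apply, if_pos huv] using one_div_pos.mpr (Nat.cast_pos.mpr degree_pos)

variable {ε : ℝ}

theorem Pmat_nonneg (hε0 : 0 ≤ ε) (hε1 : ε ≤ 1) (i j : U ⊕ V) : 0 ≤ Pmat E ε i j :=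
  add_nonneg (mul_nonneg hε0 (Hmat_nonneg i j)) (mul_nonneg (sub_nonneg.mpr hε1) (Mmat_nonneg i j))

theorem Pmat_pos_of_Hmat_pos (hε0 : 0 < ε) (hε1 : ε ≤ 1) {i j : U ⊕ V} (hij : 0 < Hmat E i j) :
    0 < Pmat E ε i j :=
  add_pos_of_pos_of_nonneg (mul_pos hε0 hij) (mul_nonneg (sub_nonneg.mpr hε1) (Mmat_nonneg i j))

theorem Pmat_pos_of_Mmat_pos (hε0 : 0 ≤ ε) (hε1 : ε < 1) {i j : U ⊕ V} (hij : 0 < Mmat U V i j) :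
    0 < Pmat E ε i j :=
  add_pos_of_nonneg_of_pos (mul_nonneg hε0 (Hmat_nonneg i j)) (mul_pos (sub_pos.mpr hε1) hij)

theorem Pmat_mul_self_pos (hU : ∀ u, ∃ v, E u v) (hV : ∀ v, ∃ u, E u v)
    (hε0 : 0 < ε) (hε1 : ε < 1) (i j : U ⊕ V) : 0 < (Pmat E ε * Pmat E ε) i j := by
  have two_steps {i j : U ⊕ V} (k : U ⊕ V) (hik : 0 < Pmat E ε i k) (hkj : 0 < Pmat E ε k j) :
      0 < (Pmat E ε * Pmat E ε) i j :=
    matrix_mul_apply_pos (Pmat_nonneg hε0.le hε1.le i)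
      (fun k => Pmat_nonneg hε0.le hε1.le k j) hik hkj
  have teleport {i j : U ⊕ V} (hij : 0 < Mmat U V i j) : 0 < Pmat E ε i j :=
    Pmat_pos_of_Mmat_pos hε0.le hε1 hij
  have walk {i j : U ⊕ V} (hij : 0 < Hmat E i j) : 0 < Pmat E ε i j :=
    Pmat_pos_of_Hmat_pos hε0 hε1.le hij
  rcases i with u | v <;> rcases j with u' | v'
  · exact two_steps (Sum.inl u) (teleport (Mmat_inl_inl_pos u u)) (teleport (Mmat_inl_inl_pos u u'))
  · obtain ⟨w, hw⟩ := hV v'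
    exact two_steps (Sum.inl w) (teleport (Mmat_inl_inl_pos u w)) (walk (Hmat_inl_inr_pos hw))
  · obtain ⟨w, hw⟩ := hU u'
    exact two_steps (Sum.inr w) (teleport (Mmat_inr_inr_pos v w)) (walk (Hmat_inr_inl_pos hw))
  · exact two_steps (Sum.inr v) (teleport (Mmat_inr_inr_pos v v)) (teleport (Mmat_inr_inr_pos v v'))

end BipartiteRank

/-- `P` is primitive: some power of `P` has all entries strictly positive. -/
theorem Pmat_primitive {U V : Type*} [Fintype U] [Fintype V]
    [DecidableEq U] [DecidableEq V] [Nonempty U] [Nonempty V]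
    (E : U → V → Prop) [∀ u v, Decidable (E u v)]
    (hedge : ∃ u v, E u v)
    (hnoIsolU : ∀ u : U, ∃ v : V, E u v) (hnoIsolV : ∀ v : V, ∃ u : U, E u v)
    (ε : ℝ) (hε0 : 0 < ε) (hε1 : ε < 1) :
    ∃ k : ℕ, 1 ≤ k ∧ ∀ i j : U ⊕ V, 0 < (Pmat E ε ^ k) i j := by
  refine ⟨2, one_le_two, fun i j => ?_⟩
  rw [sq]
  exact Pmat_mul_self_pos hnoIsolU hnoIsolV hε0 hε1 i j
end

section
/- Let S be an n×n real row-stochastic matrix, let 0 ≤ ε < 1, and let G = εS + (1−ε)(1/n)·eeᵀ be the associated Google matrix. Then every complex eigenvalue λ of G with λ ≠ 1 satisfies |λ| ≤ ε; in particular the subdominant eigenvalue λ₂ of G satisfies |λ₂(G)| ≤ ε. -/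
open Matrix

/-!
Perturbing a matrix `A` with right eigenvector `u` by a rank-one matrix `u vᵀ` moves only the
eigenvalue belonging to `u` (Brauer): a left eigenvector for any other eigenvalue is orthogonal to
`u`, hence is killed by `u vᵀ` and is already a left eigenvector of `A`. The Google matrix perturbs
`ε S` by `(1 - ε) e vᵀ` with `v` of total mass `1`, which moves the eigenvalue `ε` of `e` to `1`;
every other eigenvalue is one of `ε S`, whose absolute row sums all equal `|ε|`.
-/

theorem dotProduct_eq_zero_of_vecMul_eq_smul_of_mulVec_eq_smul {ι R : Type*} [Fintype ι]
    [CommRing R] [IsDomain R] {A : Matrix ι ι R} {w u : ι → R} {μ c : R}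
    (hw : w ᵥ* A = μ • w) (hu : A *ᵥ u = c • u) (hμ : μ ≠ c) : w ⬝ᵥ u = 0 := by
  have h : μ * (w ⬝ᵥ u) = c * (w ⬝ᵥ u) := by
    simpa only [hw, hu, smul_dotProduct, dotProduct_smul, smul_eq_mul] using
      (dotProduct_mulVec w A u).symm
  exact (mul_eq_mul_right_iff.mp h).resolve_left hμ

section Field

variable {ι K : Type*} [Fintype ι] [DecidableEq ι] [Field K] {A : Matrix ι ι K} {μ : K}

theorem mem_spectrum_iff_exists_vecMul_eq_smul :
    μ ∈ spectrum K A ↔ ∃ w ≠ 0, w ᵥ* A = μ • w := by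
  rw [spectrum.mem_iff, isUnit_iff_isUnit_det, isUnit_iff_ne_zero, not_not,
    ← exists_vecMul_eq_zero_iff]
  simp only [vecMul_sub, sub_eq_zero, Algebra.algebraMap_eq_smul_one, vecMul_smul, vecMul_one,
    eq_comm]

theorem mem_spectrum_of_mem_spectrum_add_vecMulVec {u v : ι → K} {c : K} (hu : A *ᵥ u = c • u)
    (hμ : μ ∈ spectrum K (A + vecMulVec u v)) (hne : μ ≠ c + v ⬝ᵥ u) : μ ∈ spectrum K A := by
  obtain ⟨w, hw0, hw⟩ := mem_spectrum_iff_exists_vecMul_eq_smul.mp hμ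
  have hu' : (A + vecMulVec u v) *ᵥ u = (c + v ⬝ᵥ u) • u := by
    rw [add_mulVec, hu, vecMulVec_mulVec, op_smul_eq_smul, add_smul]
  have hwu : w ⬝ᵥ u = 0 := dotProduct_eq_zero_of_vecMul_eq_smul_of_mulVec_eq_smul hw hu' hne
  rw [vecMul_add, vecMul_vecMulVec, hwu, zero_smul, add_zero] at hw
  exact mem_spectrum_iff_exists_vecMul_eq_smul.mpr ⟨w, hw0, hw⟩

end Field

theorem exists_norm_le_sum_norm_of_mem_spectrum {ι K : Type*} [Fintype ι] [DecidableEq ι]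
    [NormedField K] {A : Matrix ι ι K} {μ : K} (hμ : μ ∈ spectrum K A) :
    ∃ i, ‖μ‖ ≤ ∑ j, ‖A i j‖ := by
  rw [← spectrum_toLin', ← Module.End.hasEigenvalue_iff_mem_spectrum] at hμ
  obtain ⟨i, hi⟩ := eigenvalue_mem_ball hμ
  refine ⟨i, ?_⟩
  calc ‖μ‖ ≤ ‖A i i‖ + ‖μ - A i i‖ := norm_le_norm_add_norm_sub' μ (A i i)
    _ ≤ ‖A i i‖ + ∑ j ∈ Finset.univ.erase i, ‖A i j‖ := by
      gcongr
      exact mem_closedBall_iff_norm.mp hi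
    _ = ∑ j, ‖A i j‖ := Finset.add_sum_erase _ (‖A i ·‖) (Finset.mem_univ i)

theorem norm_le_abs_of_mem_spectrum_smul_rowStochastic {ι : Type*} [Fintype ι] [DecidableEq ι]
    {S : Matrix ι ι ℝ} (hS : S ∈ rowStochastic ℝ ι) {ε : ℝ} {lam : ℂ}
    (hlam : lam ∈ spectrum ℂ ((ε • S).map Complex.ofReal)) : ‖lam‖ ≤ |ε| := by
  obtain ⟨i, hi⟩ := exists_norm_le_sum_norm_of_mem_spectrum hlam
  calc ‖lam‖ ≤ ∑ j, ‖(ε • S).map Complex.ofReal i j‖ := hi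
    _ = ∑ j, |ε| * S i j := by
      simp [abs_of_nonneg (nonneg_of_mem_rowStochastic hS)]
    _ = |ε| := by rw [← Finset.mul_sum, sum_row_of_mem_rowStochastic hS, mul_one]

theorem google_subdominant_le_general {ι : Type*} [Fintype ι] [DecidableEq ι]
    {S : Matrix ι ι ℝ} (hS : S ∈ rowStochastic ℝ ι) {v : ι → ℝ} (hv : ∑ j, v j = 1) (ε : ℝ)
    {lam : ℂ}
    (hlam : lam ∈ spectrum ℂ ((ε • S + (1 - ε) • replicateRow ι v).map Complex.ofReal))
    (hne : lam ≠ 1) : ‖lam‖ ≤ |ε| := by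
  have hG : (ε • S + (1 - ε) • replicateRow ι v).map Complex.ofReal =
      (ε • S).map Complex.ofReal + vecMulVec 1 (fun j ↦ ((1 - ε) * v j : ℂ)) := by
    ext i j
    simp
  have hS1 : (ε • S).map Complex.ofReal *ᵥ 1 = (ε : ℂ) • 1 := by
    ext i
    simp [mulVec, dotProduct_one, ← Finset.mul_sum, ← Complex.ofReal_sum,
      sum_row_of_mem_rowStochastic hS]
  have hv1 : (ε : ℂ) + (fun j ↦ ((1 - ε) * v j : ℂ)) ⬝ᵥ 1 = 1 := by
    simp [dotProduct_one, ← Finset.mul_sum, ← Complex.ofReal_sum, hv]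
  rw [hG] at hlam
  exact norm_le_abs_of_mem_spectrum_smul_rowStochastic hS
    (mem_spectrum_of_mem_spectrum_add_vecMulVec hS1 hlam (hv1.symm ▸ hne))

/-- Every eigenvalue `λ ≠ 1` of the Google matrix `G = ε S + (1-ε) (1/n) e eᵀ`
built from a row-stochastic matrix `S` satisfies `|λ| ≤ ε`; in particular its
subdominant eigenvalue satisfies `|λ₂(G)| ≤ ε`. -/
theorem google_subdominant_le (n : ℕ) (hn : 0 < n) (S : Matrix (Fin n) (Fin n) ℝ)
    (hS0 : ∀ i j, 0 ≤ S i j) (hS1 : ∀ i, ∑ j, S i j = 1)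
    (ε : ℝ) (hε0 : 0 ≤ ε) (hε1 : ε < 1) :
    ∀ lam : ℂ,
      lam ∈ spectrum ℂ
        ((ε • S + (1 - ε) • Matrix.of fun _ _ : Fin n => (1 : ℝ) / n).map
          Complex.ofReal) →
      lam ≠ 1 → ‖lam‖ ≤ ε := by
  intro _ hlam hne
  exact abs_of_nonneg hε0 ▸ google_subdominant_le_general
    (mem_rowStochastic_iff_sum.mpr ⟨hS0, hS1⟩) (v := fun _ ↦ 1 / n) (by simp [hn.ne']) ε hlam hne
end
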